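/- Assume A satisfies Assumption 3.1 with sup_a M(a) < +∞, and the tolerances satisfy Σ_{j=0}^{∞} ε_j < ∞. Run the greedy boosting algorithm with Λ_k = ℝ and with each ᾱ_k an exact line minimizer: A(f_k + ᾱ_k ḡ_k) = inf_{α ∈ ℝ} A(f_k + α ḡ_k). If inf_k inf_{ξ∈(0,1)} A''_{(1−ξ)f_k + ξ f_{k+1}, ḡ_k}(0) > 0, then lim_{k→∞} A(f_k) = inf_{f ∈ span(S)} A(f). -/

import Mathlib

/-!
Suppose some `q` in the span and some `y > A q` satisfy `y ≤ A (f k)` for all `k`, and let `δ k` be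
the decrease `A (f k) - A (f (k + 1))` plus `ε k`, a summable sequence. An upper bound `B` on the
second derivatives makes every near-optimal line search certify a small gradient,
`|∇A (f k) b| ≤ √(2 B δ k)` for `b ∈ S`, so by convexity
`y - A q ≤ √(2 B δ k) ‖f k - q‖₁`. The lower bound `c` along exact steps gives
`c (α k)² / 2 ≤ δ k`, so `α` is square summable and, by Cauchy–Schwarz,
`‖f k - q‖₁ ≤ ‖f 0 - q‖₁ + ∑_{j < k} |α j| = O(√k)`. Squaring, `δ k` is at least a constant
multiple of `1 / (k + 1)`, which is not summable.
-/

open Filter Finset Set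

variable {V : Type*} [AddCommGroup V] [Module ℝ V]

/-- The 1-norm `‖f‖₁` of `f` with respect to the basis set `S`: the infimum of `∑ |wʲ|`
over all representations `f = ∑ wʲ fʲ` with `fʲ ∈ S`. -/
noncomputable def norm1 (S : Set V) (f : V) : ℝ :=
  sInf {c : ℝ | ∃ (n : ℕ) (w : Fin n → ℝ) (g : Fin n → V),
    (∀ i, g i ∈ S) ∧ f = ∑ i, w i • g i ∧ c = ∑ i, |w i|}

/-- Assumption 3.1: `A` is convex on `span S`, differentiable with gradient `∇A` (a linear
functional), and for `f ∈ span S`, `g ∈ S` the function `h ↦ A (f + h g)` is twice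
differentiable with second derivative at `0` bounded by `M (‖f‖₁)`, `M` nondecreasing. -/
structure Assumption31 (S : Set V) (A : V → ℝ) (M : ℝ → ℝ) : Prop where
  convexOn : ConvexOn ℝ (Submodule.span ℝ S : Set V) A
  differentiable : ∃ G : V → V →ₗ[ℝ] ℝ, ∀ f ∈ Submodule.span ℝ S, ∀ g ∈ Submodule.span ℝ S,
    Filter.Tendsto (fun h : ℝ => (A (f + h • g) - A f) / h)
      (nhdsWithin (0 : ℝ) {(0 : ℝ)}ᶜ) (nhds (G f g))
  mono : Monotone M
  secondDeriv : ∀ f ∈ Submodule.span ℝ S, ∀ g ∈ S, ∃ d1 d2 : ℝ → ℝ,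
    (∀ h : ℝ, HasDerivAt (fun t : ℝ => A (f + t • g)) (d1 h) h) ∧
    (∀ h : ℝ, HasDerivAt d1 (d2 h) h) ∧ d2 0 ≤ M (norm1 S f)

/-- Algorithm 2.1 (greedy boosting): `f 0 ∈ span S`; at step `k`, `Λ k` is a closed symmetric
subset of `ℝ` containing `0`, `α k ∈ Λ k`, `g k ∈ S`, `f (k+1) = f k + α k • g k`, and
`(α k, g k)` approximately minimizes `A (f k + a • b)` over `a ∈ Λ k`, `b ∈ S` up to `ε k ≥ 0`. -/
structure GreedyBoosting (S : Set V) (A : V → ℝ) (f : ℕ → V) (α : ℕ → ℝ) (g : ℕ → V)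
    (Λ : ℕ → Set ℝ) (ε : ℕ → ℝ) : Prop where
  init_mem : f 0 ∈ Submodule.span ℝ S
  lambda_closed : ∀ k, IsClosed (Λ k)
  lambda_zero : ∀ k, (0 : ℝ) ∈ Λ k
  lambda_symm : ∀ k, ∀ a ∈ Λ k, -a ∈ Λ k
  eps_nonneg : ∀ k, 0 ≤ ε k
  alpha_mem : ∀ k, α k ∈ Λ k
  g_mem : ∀ k, g k ∈ S
  step : ∀ k, f (k + 1) = f k + α k • g k
  approx_min : ∀ k, ∀ a ∈ Λ k, ∀ b ∈ S, A (f (k + 1)) ≤ A (f k + a • b) + ε k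

section Taylor

variable {p p' p'' : ℝ → ℝ}

theorem exists_taylor_two_eq (hp : ∀ t, HasDerivAt p (p' t) t)
    (hp' : ∀ t, HasDerivAt p' (p'' t) t) (a b : ℝ) :
    ∃ θ ∈ Ioo (0 : ℝ) 1,
      p b = p a + p' a * (b - a) + p'' ((1 - θ) * a + θ * b) / 2 * (b - a) ^ 2 := by
  obtain rfl | hab := eq_or_ne a b
  · exact ⟨1 / 2, by norm_num, by simp⟩
  have hu : UniqueDiffOn ℝ (uIcc a b) := uniqueDiffOn_uIcc hab
  have hderiv : deriv p = p' := funext fun t => (hp t).deriv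
  have hC1 : ContDiff ℝ 1 p := contDiff_one_iff_deriv.2
    ⟨fun t => (hp t).differentiableAt,
      hderiv ▸ continuous_iff_continuousAt.2 fun t => (hp' t).continuousAt⟩
  have hfirst : EqOn (iteratedDerivWithin 1 p (uIcc a b)) p' (uIcc a b) := fun t ht => by
    rw [iteratedDerivWithin_one, (hp t).hasDerivWithinAt.derivWithin (hu t ht)]
  have hsecond {t : ℝ} (ht : t ∈ uIcc a b) : iteratedDerivWithin 2 p (uIcc a b) t = p'' t := by
    rw [iteratedDerivWithin_succ, derivWithin_congr hfirst (hfirst ht),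
      (hp' t).hasDerivWithinAt.derivWithin (hu t ht)]
  have hdiff : DifferentiableOn ℝ (iteratedDerivWithin 1 p (uIcc a b)) (uIoo a b) :=
    DifferentiableOn.congr (fun t _ => (hp' t).differentiableAt.differentiableWithinAt)
      (hfirst.mono Ioo_subset_Icc_self)
  obtain ⟨ξ, hξ, htaylor⟩ := taylor_mean_remainder_lagrange (n := 1) hab hC1.contDiffOn hdiff
  obtain ⟨θ, hθ, rfl⟩ : ξ ∈ (fun θ : ℝ => (1 - θ) • a + θ • b) '' Ioo 0 1 := by
    rwa [← openSegment_eq_image, openSegment_eq_Ioo' hab]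
  refine ⟨θ, hθ, ?_⟩
  rw [hsecond (Ioo_subset_Icc_self hξ), taylorWithinEval_succ, taylor_within_zero_eval,
    hfirst left_mem_uIcc] at htaylor
  simp only [CharP.cast_eq_zero, zero_add, Nat.factorial_zero, Nat.cast_one, mul_one, inv_one,
    pow_one, one_mul, smul_eq_mul, Nat.reduceAdd, Nat.factorial_two, Nat.cast_ofNat] at htaylor
  linarith

theorem deriv_sq_le_of_second_deriv_le (hp : ∀ t, HasDerivAt p (p' t) t)
    (hp' : ∀ t, HasDerivAt p' (p'' t) t) {B δ x : ℝ} (hB : ∀ t, p'' t ≤ B)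
    (hδ : ∀ t, p x - δ ≤ p t) : p' x ^ 2 ≤ 2 * B * δ := by
  have hquad (s : ℝ) : 0 ≤ B / 2 * (s * s) + p' x * s + δ := by
    obtain ⟨θ, -, htaylor⟩ := exists_taylor_two_eq hp hp' x (x + s)
    rw [add_sub_cancel_left] at htaylor
    have := mul_le_mul_of_nonneg_right (hB ((1 - θ) * x + θ * (x + s))) (sq_nonneg s)
    linarith [hδ (x + s)]
  have := discrim_le_zero hquad
  rw [discrim] at this
  linarith

theorem add_mul_sq_le_of_isLocalMin (hp : ∀ t, HasDerivAt p (p' t) t)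
    (hp' : ∀ t, HasDerivAt p' (p'' t) t) {a b c : ℝ} (hmin : IsLocalMin p a)
    (hc : ∀ θ ∈ Ioo (0 : ℝ) 1, c ≤ p'' ((1 - θ) * a + θ * b)) :
    p a + c / 2 * (b - a) ^ 2 ≤ p b := by
  obtain ⟨θ, hθ, htaylor⟩ := exists_taylor_two_eq hp hp' a b
  rw [htaylor, hmin.hasDerivAt_eq_zero (hp a), zero_mul, add_zero]
  gcongr
  exact hc θ hθ

end Taylor

theorem summable_sub_succ_of_antitone {u : ℕ → ℝ} (hu : Antitone u) {y : ℝ} (hy : ∀ k, y ≤ u k) :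
    Summable fun k => u k - u (k + 1) := by
  refine summable_of_sum_range_le (c := u 0 - y) (fun k => sub_nonneg.2 (hu k.le_succ)) fun n => ?_
  rw [sum_range_sub']
  linarith [hy n]

theorem sq_add_sum_abs_le {a : ℕ → ℝ} (ha : Summable fun j => a j ^ 2) (C : ℝ) (k : ℕ) :
    (C + ∑ j ∈ range k, |a j|) ^ 2 ≤ 2 * (C ^ 2 + ∑' j, a j ^ 2) * (k + 1) := by
  have hsum : (∑ j ∈ range k, |a j|) ^ 2 ≤ k * ∑' j, a j ^ 2 := calc
    _ ≤ k * ∑ j ∈ range k, a j ^ 2 := by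
      simpa only [sq_abs, card_range] using
        sq_sum_le_card_mul_sum_sq (s := range k) (f := fun j => |a j|)
    _ ≤ k * ∑' j, a j ^ 2 := by
      gcongr
      exact ha.sum_le_tsum _ fun j _ => sq_nonneg (a j)
  have htsum : 0 ≤ ∑' j, a j ^ 2 := tsum_nonneg fun j => sq_nonneg (a j)
  have hC : 0 ≤ k * C ^ 2 := by positivity
  linarith [add_sq_le (a := C) (b := ∑ j ∈ range k, |a j|)]

theorem exists_mul_sq_add_sum_abs_lt {δ a : ℕ → ℝ} (hδ : Summable δ)
    (ha : Summable fun j => a j ^ 2) (C : ℝ) {r : ℝ} (hr : 0 < r) :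
    ∃ k, δ k * (C + ∑ j ∈ range k, |a j|) ^ 2 < r := by
  by_contra! hle
  set K := 2 * (C ^ 2 + ∑' j, a j ^ 2)
  have hharmonic (k : ℕ) : 1 / ((k : ℝ) + 1) ≤ K / r * δ k := by
    have hδk : 0 ≤ δ k := (pos_of_mul_pos_left (hr.trans_le (hle k)) (sq_nonneg _)).le
    have hrk : r ≤ δ k * (K * (k + 1)) :=
      (hle k).trans (mul_le_mul_of_nonneg_left (sq_add_sum_abs_le ha C k) hδk)
    rw [div_mul_eq_mul_div, div_le_div_iff₀ (by positivity) hr]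
    linarith
  have hsum : Summable fun k : ℕ => 1 / ((k : ℝ) + 1) :=
    .of_nonneg_of_le (fun k => by positivity) hharmonic (hδ.mul_left _)
  refine Real.not_summable_one_div_natCast ((summable_nat_add_iff 1).1 ?_)
  simpa only [Nat.cast_add_one] using hsum

theorem tendsto_coe_biInf_of_antitone {ι X : Type*} [Preorder ι] {A : X → ℝ} {s : Set X}
    {x : ι → X} (hxs : ∀ i, x i ∈ s) (hanti : Antitone fun i => A (x i))
    (hlt : ∀ q ∈ s, ∀ y, A q < y → ∃ i, A (x i) < y) :
    Tendsto (fun i => (A (x i) : EReal)) atTop (nhds (⨅ q ∈ s, (A q : EReal))) := by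
  have hinf : ⨅ q ∈ s, (A q : EReal) = ⨅ i, (A (x i) : EReal) := by
    refine le_antisymm (le_iInf fun i => iInf₂_le (x i) (hxs i)) (le_iInf₂ fun q hq => ?_)
    refine EReal.le_of_forall_lt_iff_le.1 fun y hy => ?_
    obtain ⟨i, hi⟩ := hlt q hq y (EReal.coe_lt_coe_iff.1 hy)
    exact iInf_le_of_le i (EReal.coe_le_coe_iff.2 hi.le)
  rw [hinf]
  exact tendsto_atTop_iInf fun i j hij => EReal.coe_le_coe_iff.2 (hanti hij)

section Norm1

variable {S : Set V}

theorem norm1_sum_le {n : ℕ} (w : Fin n → ℝ) {g : Fin n → V} (hg : ∀ i, g i ∈ S) :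
    norm1 S (∑ i, w i • g i) ≤ ∑ i, |w i| := by
  refine csInf_le ⟨0, ?_⟩ ⟨n, w, g, hg, rfl, rfl⟩
  rintro _ ⟨m, v, -, -, -, rfl⟩
  exact sum_nonneg fun i _ => abs_nonneg (v i)

theorem le_norm1 {x : V} (hx : x ∈ Submodule.span ℝ S) {c : ℝ}
    (hc : ∀ (n : ℕ) (w : Fin n → ℝ) (g : Fin n → V),
      (∀ i, g i ∈ S) → x = ∑ i, w i • g i → c ≤ ∑ i, |w i|) : c ≤ norm1 S x := by
  obtain ⟨n, w, g, hx⟩ := Submodule.mem_span_set'.1 hx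
  refine le_csInf ⟨_, n, w, fun i => g i, fun i => (g i).2, hx.symm, rfl⟩ ?_
  rintro _ ⟨m, v, b, hb, hxb, rfl⟩
  exact hc m v b hb hxb

theorem norm1_smul_le {b : V} (hb : b ∈ S) (a : ℝ) : norm1 S (a • b) ≤ |a| := by
  simpa using norm1_sum_le (fun _ : Fin 1 => a) (fun _ => hb)

theorem norm1_add_le {x y : V} (hx : x ∈ Submodule.span ℝ S) (hy : y ∈ Submodule.span ℝ S) :
    norm1 S (x + y) ≤ norm1 S x + norm1 S y := by
  rw [← sub_le_iff_le_add]
  refine le_norm1 hx fun m v b hb hxb => ?_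
  rw [sub_le_comm]
  refine le_norm1 hy fun n w g hg hyg => ?_
  rw [sub_le_iff_le_add']
  have hbg : ∀ i, Fin.append b g i ∈ S := Fin.addCases (by simpa using hb) (by simpa using hg)
  simpa only [Fin.sum_univ_add, Fin.append_left, Fin.append_right, ← hxb, ← hyg] using
    norm1_sum_le (Fin.append v w) hbg

theorem abs_apply_le_mul_norm1 {x : V} (hx : x ∈ Submodule.span ℝ S) (L : V →ₗ[ℝ] ℝ) {t : ℝ}
    (ht : 0 ≤ t) (hL : ∀ b ∈ S, |L b| ≤ t) : |L x| ≤ t * norm1 S x := by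
  have hrep (n : ℕ) (w : Fin n → ℝ) (g : Fin n → V) (hg : ∀ i, g i ∈ S)
      (hxg : x = ∑ i, w i • g i) : |L x| ≤ t * ∑ i, |w i| := calc
    |L x| = |∑ i, w i * L (g i)| := by simp only [hxg, map_sum, map_smul, smul_eq_mul]
    _ ≤ ∑ i, |w i| * |L (g i)| := by
      simpa only [abs_mul] using abs_sum_le_sum_abs (fun i => w i * L (g i)) univ
    _ ≤ ∑ i, |w i| * t := by gcongr with i; exact hL _ (hg i)
    _ = t * ∑ i, |w i| := by rw [← sum_mul, mul_comm]
  obtain rfl | ht := ht.eq_or_lt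
  · obtain ⟨n, w, g, hxg⟩ := Submodule.mem_span_set'.1 hx
    simpa only [zero_mul] using hrep n w (fun i => g i) (fun i => (g i).2) hxg.symm
  · rw [← div_le_iff₀' ht]
    exact le_norm1 hx fun n w g hg hxg => (div_le_iff₀' ht).2 (hrep n w g hg hxg)

end Norm1

theorem lineDeriv_le_sub_of_convexOn {s : Set V} {A : V → ℝ} (hA : ConvexOn ℝ s A) {x q : V}
    (hx : x ∈ s) (hq : q ∈ s) {m : ℝ} (hm : HasLineDerivAt ℝ A m x (q - x)) :
    m ≤ A q - A x := by
  have hline (t : ℝ) : AffineMap.lineMap x q t = x + t • (q - x) := by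
    rw [AffineMap.lineMap_apply_module', add_comm]
  have hconv : ConvexOn ℝ (AffineMap.lineMap x q ⁻¹' s) fun t : ℝ => A (x + t • (q - x)) := by
    simpa only [Function.comp_def, hline] using hA.comp_affineMap (AffineMap.lineMap x q)
  simpa [slope_def_field] using
    hconv.le_slope_of_hasDerivAt (by simpa using hx) (by simpa using hq) one_pos hm

/-- `d1 x b` and `d2 x b` are the first two derivatives of the restriction `t ↦ A (x + t • b)` of
`A` to the line through a point `x ∈ span S` in a direction `b ∈ S`. In the paper's notation
`d1 x b 0 = ∇A(x)ᵀb` and `d2 x b t = A''_{x,b}(t)`. -/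
structure HasLineDerivs (S : Set V) (A : V → ℝ) (d1 d2 : V → V → ℝ → ℝ) : Prop where
  first : ∀ x ∈ Submodule.span ℝ S, ∀ b ∈ S, ∀ t : ℝ,
    HasDerivAt (fun u : ℝ => A (x + u • b)) (d1 x b t) t
  second : ∀ x ∈ Submodule.span ℝ S, ∀ b ∈ S, ∀ t : ℝ, HasDerivAt (d1 x b) (d2 x b t) t

section Boosting

variable {S : Set V} {A : V → ℝ} {M : ℝ → ℝ} {d1 d2 : V → V → ℝ → ℝ}

theorem add_smul_mem_span {x b : V} (hx : x ∈ Submodule.span ℝ S) (hb : b ∈ S) (t : ℝ) :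
    x + t • b ∈ Submodule.span ℝ S :=
  add_mem hx (Submodule.smul_mem _ t (Submodule.subset_span hb))

theorem second_deriv_add_smul {x b : V} {s c e : ℝ} {p' r' : ℝ → ℝ}
    (hp : ∀ t, HasDerivAt (fun u : ℝ => A (x + u • b)) (p' t) t) (hp' : HasDerivAt p' c s)
    (hr : ∀ t, HasDerivAt (fun u : ℝ => A (x + s • b + u • b)) (r' t) t)
    (hr' : HasDerivAt r' e 0) : e = c := by
  have hfirst : r' = fun t => p' (s + t) := funext fun t => (hr t).unique <| by
    simpa only [add_smul, add_assoc] using (hp (s + t)).comp_const_add s t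
  rw [hfirst] at hr'
  exact hr'.unique (HasDerivAt.comp_const_add s 0 (by rwa [add_zero]))

theorem HasLineDerivs.second_add_smul (hd : HasLineDerivs S A d1 d2) {x b : V}
    (hx : x ∈ Submodule.span ℝ S) (hb : b ∈ S) (s : ℝ) : d2 (x + s • b) b 0 = d2 x b s :=
  have hxs := add_smul_mem_span hx hb s
  second_deriv_add_smul (hd.first x hx b hb) (hd.second x hx b hb s) (hd.first _ hxs b hb)
    (hd.second _ hxs b hb 0)

theorem Assumption31.second_le (hA : Assumption31 S A M) (hd : HasLineDerivs S A d1 d2) {B : ℝ}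
    (hB : ∀ a, M a ≤ B) {x b : V} (hx : x ∈ Submodule.span ℝ S) (hb : b ∈ S) (t : ℝ) :
    d2 x b t ≤ B := by
  obtain ⟨r', r'', hr, hr', hM⟩ := hA.secondDeriv _ (add_smul_mem_span hx hb t) b hb
  rw [← second_deriv_add_smul (hd.first x hx b hb) (hd.second x hx b hb t) hr (hr' 0)]
  exact hM.trans (hB _)

theorem Assumption31.sub_le_mul_norm1 (hA : Assumption31 S A M) (hd : HasLineDerivs S A d1 d2)
    {x q : V} (hx : x ∈ Submodule.span ℝ S) (hq : q ∈ Submodule.span ℝ S) {t : ℝ} (ht : 0 ≤ t)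
    (hgrad : ∀ b ∈ S, |d1 x b 0| ≤ t) : A x - A q ≤ t * norm1 S (x - q) := by
  obtain ⟨G, hG⟩ := hA.differentiable
  have hlineDeriv {b : V} (hb : b ∈ Submodule.span ℝ S) : HasLineDerivAt ℝ A (G x b) x b :=
    hasLineDerivAt_iff_tendsto_slope_zero.2 <| by
      simpa only [div_eq_inv_mul, smul_eq_mul] using hG x hx b hb
  have hG_le (b : V) (hb : b ∈ S) : |G x b| ≤ t := by
    rw [(hlineDeriv (Submodule.subset_span hb)).unique (hd.first x hx b hb 0)]
    exact hgrad b hb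
  calc A x - A q ≤ G x (x - q) := by
        have := lineDeriv_le_sub_of_convexOn hA.convexOn hx hq (hlineDeriv (sub_mem hq hx))
        rw [← neg_sub x q, map_neg] at this
        linarith
    _ ≤ |G x (x - q)| := le_abs_self _
    _ ≤ t * norm1 S (x - q) := abs_apply_le_mul_norm1 (sub_mem hx hq) (G x) ht hG_le

namespace GreedyBoosting

variable {f : ℕ → V} {α : ℕ → ℝ} {g : ℕ → V} {Λ : ℕ → Set ℝ} {ε : ℕ → ℝ}

theorem mem_span (h : GreedyBoosting S A f α g Λ ε) (k : ℕ) : f k ∈ Submodule.span ℝ S := by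
  induction k with
  | zero => exact h.init_mem
  | succ k ih => exact h.step k ▸ add_smul_mem_span ih (h.g_mem k) (α k)

theorem norm1_sub_le (h : GreedyBoosting S A f α g Λ ε) {q : V} (hq : q ∈ Submodule.span ℝ S)
    (k : ℕ) : norm1 S (f k - q) ≤ norm1 S (f 0 - q) + ∑ j ∈ range k, |α j| := by
  induction k with
  | zero => simp
  | succ k ih =>
    have hg : α k • g k ∈ Submodule.span ℝ S :=
      Submodule.smul_mem _ _ (Submodule.subset_span (h.g_mem k))
    calc norm1 S (f (k + 1) - q) = norm1 S (f k - q + α k • g k) := by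
          rw [h.step, add_sub_right_comm]
      _ ≤ norm1 S (f k - q) + norm1 S (α k • g k) := norm1_add_le (sub_mem (h.mem_span k) hq) hg
      _ ≤ norm1 S (f 0 - q) + ∑ j ∈ range k, |α j| + |α k| :=
        add_le_add ih (norm1_smul_le (h.g_mem k) (α k))
      _ = norm1 S (f 0 - q) + ∑ j ∈ range (k + 1), |α j| := by rw [sum_range_succ, add_assoc]

theorem first_sq_le_of_second_le (h : GreedyBoosting S A f α g (fun _ => univ) ε)
    (hd : HasLineDerivs S A d1 d2) {B : ℝ} {k : ℕ} {b : V} (hb : b ∈ S)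
    (hB : ∀ t, d2 (f k) b t ≤ B) :
    d1 (f k) b 0 ^ 2 ≤ 2 * B * (A (f k) - A (f (k + 1)) + ε k) := by
  refine deriv_sq_le_of_second_deriv_le (hd.first _ (h.mem_span k) b hb)
    (hd.second _ (h.mem_span k) b hb) hB fun t => ?_
  rw [zero_smul, add_zero]
  linarith [h.approx_min k t (mem_univ t) b hb]

theorem add_mul_sq_step_le (h : GreedyBoosting S A f α g Λ ε) (hd : HasLineDerivs S A d1 d2) {c : ℝ}
    {k : ℕ} (hexact : ∀ b : ℝ, A (f (k + 1)) ≤ A (f k + b • g k))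
    (hc : ∀ ξ ∈ Ioo (0 : ℝ) 1, c ≤ d2 ((1 - ξ) • f k + ξ • f (k + 1)) (g k) 0) :
    A (f (k + 1)) + c / 2 * α k ^ 2 ≤ A (f k) := by
  have hcurv (θ : ℝ) (hθ : θ ∈ Ioo (0 : ℝ) 1) :
      c ≤ d2 (f k) (g k) ((1 - θ) * α k + θ * 0) := by
    have hpoint : (1 - (1 - θ)) • f k + (1 - θ) • f (k + 1) =
        f k + ((1 - θ) * α k + θ * 0) • g k := by
      rw [h.step]
      module
    rw [← hd.second_add_smul (h.mem_span k) (h.g_mem k), ← hpoint]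
    exact hc (1 - θ) ⟨sub_pos.2 hθ.2, sub_lt_self 1 hθ.1⟩
  have hmin : IsLocalMin (fun t => A (f k + t • g k)) (α k) :=
    .of_forall fun t => by simpa only [h.step] using hexact t
  simpa [h.step] using add_mul_sq_le_of_isLocalMin (hd.first _ (h.mem_span k) _ (h.g_mem k))
    (hd.second _ (h.mem_span k) _ (h.g_mem k)) hmin hcurv

theorem gap_sq_le (h : GreedyBoosting S A f α g (fun _ => univ) ε) (hA : Assumption31 S A M)
    (hd : HasLineDerivs S A d1 d2) {B : ℝ} (hB : ∀ a, M a ≤ B) {q : V}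
    (hq : q ∈ Submodule.span ℝ S) {k : ℕ} (hqk : A q ≤ A (f k)) :
    (A (f k) - A q) ^ 2 ≤ 2 * B * (A (f k) - A (f (k + 1)) + ε k) *
      (norm1 S (f 0 - q) + ∑ j ∈ range k, |α j|) ^ 2 := by
  set τ := 2 * B * (A (f k) - A (f (k + 1)) + ε k)
  have hgrad_sq (b : V) (hb : b ∈ S) : d1 (f k) b 0 ^ 2 ≤ τ :=
    h.first_sq_le_of_second_le hd hb (hA.second_le hd hB (h.mem_span k) hb)
  have hτ : 0 ≤ τ := (sq_nonneg _).trans (hgrad_sq (g k) (h.g_mem k))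
  have hsub : A (f k) - A q ≤ √τ * (norm1 S (f 0 - q) + ∑ j ∈ range k, |α j|) := calc
    _ ≤ √τ * norm1 S (f k - q) :=
      hA.sub_le_mul_norm1 hd (h.mem_span k) hq τ.sqrt_nonneg fun b hb =>
        Real.abs_le_sqrt (hgrad_sq b hb)
    _ ≤ _ := by gcongr; exact h.norm1_sub_le hq k
  calc (A (f k) - A q) ^ 2 ≤ (√τ * (norm1 S (f 0 - q) + ∑ j ∈ range k, |α j|)) ^ 2 :=
        pow_le_pow_left₀ (sub_nonneg.2 hqk) hsub 2
    _ = _ := by rw [mul_pow, Real.sq_sqrt hτ]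

theorem exists_value_lt (h : GreedyBoosting S A f α g (fun _ => univ) ε) (hA : Assumption31 S A M)
    (hd : HasLineDerivs S A d1 d2) {B : ℝ} (hB : ∀ a, M a ≤ B) (hε : Summable ε) {c : ℝ}
    (hc : 0 < c) (hdec : ∀ k, A (f (k + 1)) + c / 2 * α k ^ 2 ≤ A (f k)) {q : V}
    (hq : q ∈ Submodule.span ℝ S) {y : ℝ} (hqy : A q < y) : ∃ k, A (f k) < y := by
  by_contra! hy
  have hanti : Antitone fun k => A (f k) := antitone_nat_of_succ_le fun k =>
    (le_add_of_nonneg_right (by positivity)).trans (hdec k)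
  have hdec_sum : Summable fun k => A (f k) - A (f (k + 1)) :=
    summable_sub_succ_of_antitone hanti hy
  have hα_sum : Summable fun k => α k ^ 2 := by
    refine .of_nonneg_of_le (fun k => sq_nonneg (α k)) (fun k => ?_) (hdec_sum.mul_left (2 / c))
    rw [div_mul_eq_mul_div, le_div_iff₀ hc]
    linarith [hdec k]
  obtain ⟨k, hk⟩ := exists_mul_sq_add_sum_abs_lt ((hdec_sum.add hε).mul_left (2 * B)) hα_sum
    (norm1 S (f 0 - q)) (pow_pos (sub_pos.2 hqy) 2)
  refine hk.not_ge (le_trans ?_ (h.gap_sq_le hA hd hB hq (hqy.le.trans (hy k))))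
  exact pow_le_pow_left₀ (sub_pos.2 hqy).le (sub_le_sub_right (hy k) _) 2

end GreedyBoosting

end Boosting

/-- Corollary A.1: under Assumption 3.1 with `sup_a M a < ∞` and `∑ ε j < ∞`, if the greedy
boosting algorithm is run with `Λ k = ℝ`, each step-size `α k` is an exact line minimizer,
and `inf_k inf_{ξ ∈ (0,1)} A''_{(1-ξ) f k + ξ f (k+1), g k}(0) > 0`, then
`A (f k) → inf_{f ∈ span S} A f`. Here `d1 f g` and `d2 f g` are the first and second
derivatives of `h ↦ A (f + h g)`. -/
theorem unrestricted_exact_convergence (S : Set V) (A : V → ℝ) (M : ℝ → ℝ)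
    (hA : Assumption31 S A M)
    (hM : ∃ B : ℝ, ∀ a : ℝ, M a ≤ B)
    (d1 d2 : V → V → ℝ → ℝ)
    (hd1 : ∀ f ∈ Submodule.span ℝ S, ∀ g ∈ S, ∀ t : ℝ,
      HasDerivAt (fun u : ℝ => A (f + u • g)) (d1 f g t) t)
    (hd2 : ∀ f ∈ Submodule.span ℝ S, ∀ g ∈ S, ∀ t : ℝ, HasDerivAt (d1 f g) (d2 f g t) t)
    (f : ℕ → V) (α : ℕ → ℝ) (g : ℕ → V) (ε : ℕ → ℝ)
    (hboost : GreedyBoosting S A f α g (fun _ => Set.univ) ε)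
    (hε : Summable ε)
    (hexact : ∀ k (b : ℝ), A (f (k + 1)) ≤ A (f k + b • g k))
    (hlb : ∃ c : ℝ, 0 < c ∧
      ∀ k, ∀ ξ ∈ Set.Ioo (0 : ℝ) 1, c ≤ d2 ((1 - ξ) • f k + ξ • f (k + 1)) (g k) 0) :
    Tendsto (fun k => (A (f k) : EReal)) atTop
      (nhds (⨅ q ∈ (Submodule.span ℝ S : Set V), (A q : EReal))) := by
  obtain ⟨B, hB⟩ := hM
  obtain ⟨c, hc, hlb⟩ := hlb
  have hd : HasLineDerivs S A d1 d2 := ⟨hd1, hd2⟩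
  have hdec (k : ℕ) : A (f (k + 1)) + c / 2 * α k ^ 2 ≤ A (f k) :=
    hboost.add_mul_sq_step_le hd (hexact k) (hlb k)
  have hanti : Antitone fun k => A (f k) :=
    antitone_nat_of_succ_le fun k => by simpa using hexact k 0
  exact tendsto_coe_biInf_of_antitone hboost.mem_span hanti fun q hq y hqy =>
    hboost.exists_value_lt hA hd hB hε hc hdec hq hqy
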